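/- Let n ≥ 0 and let k = 2n + 1. Define the block-diagonal matrix H_o : Matrix (Fin (n+1) ⊕ Fin n) (Fin (n+1) ⊕ Fin n) ℝ (equivalently a k×k matrix) whose upper-left (n+1)×(n+1) block has entries 1/(2i + 2j + 1) (0-indexed), whose lower-right n×n block has entries -1/(2i + 2j + 3) (0-indexed), and whose off-diagonal blocks are zero. Then H_o is invertible and the sum of all entries of H_o⁻¹ equals k. -/

import Mathlib

/-- The block-diagonal matrix `H_o` (for odd `k = 2n+1`): upper-left `(n+1)×(n+1)` block
with entries `1/(2i+2j+1)` (0-indexed), lower-right `n×n` block with entries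
`-1/(2i+2j+3)` (0-indexed), zero off-diagonal blocks. -/
noncomputable def Ho (n : ℕ) : Matrix (Fin (n + 1) ⊕ Fin n) (Fin (n + 1) ⊕ Fin n) ℝ :=
  Matrix.fromBlocks
    (Matrix.of fun i j => 1 / (2 * ((i : ℕ) : ℝ) + 2 * ((j : ℕ) : ℝ) + 1)) 0 0
    (Matrix.of fun i j => -(1 / (2 * ((i : ℕ) : ℝ) + 2 * ((j : ℕ) : ℝ) + 3)))

/-!
Both blocks of `H_o` are Cauchy matrices `C = (1 / (x i + x j))`, with nodes `2i + 1/2` and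
`-(2i + 3/2)`. Such a `C` is invertible: if `C *ᵥ w = 0`, then the numerator of
`∑ j, w j / (X + x j)` has degree less than the number of nodes and vanishes at every `x i`, so it
is zero and `w = 0`. With `D = diagonal x`, the matrix `D * C + C * D` has all its entries equal
to `1`, so the sum of the entries of `C⁻¹` is `trace (C⁻¹ * (D * C + C * D)) = 2 * trace D`.
-/

open Matrix

section CommRing

variable {m n R : Type*} [Fintype m] [DecidableEq m] [Fintype n] [DecidableEq n] [CommRing R]

theorem dotProduct_inv_mulVec_eq_trace_add_trace {A B C : Matrix n n R} {u v : n → R}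
    (hC : IsUnit C) (h : A * C + C * B = vecMulVec u v) :
    v ⬝ᵥ C⁻¹ *ᵥ u = trace A + trace B := by
  have hdet : IsUnit C.det := (isUnit_iff_isUnit_det C).mp hC
  calc v ⬝ᵥ C⁻¹ *ᵥ u = trace (C⁻¹ * vecMulVec u v) := by
        rw [mul_vecMulVec, trace_vecMulVec, dotProduct_comm]
    _ = trace (C⁻¹ * (A * C)) + trace (C⁻¹ * (C * B)) := by rw [← h, mul_add, trace_add]
    _ = trace A + trace B := by
        rw [trace_mul_comm, mul_nonsing_inv_cancel_right C A hdet,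
          nonsing_inv_mul_cancel_left C B hdet]

theorem sum_inv_fromBlocks_diagonal {A : Matrix m m R} {D : Matrix n n R}
    (hAD : IsUnit A ↔ IsUnit D) :
    ∑ i, ∑ j, (fromBlocks A 0 0 D)⁻¹ i j = ∑ i, ∑ j, A⁻¹ i j + ∑ i, ∑ j, D⁻¹ i j := by
  rw [inv_fromBlocks_zero₂₁_of_isUnit_iff A 0 D hAD]
  simp

end CommRing

section Cauchy

variable {m n K : Type*} [Field K]

/-- The Cauchy matrix `1 / (x i + y j)`. The nodes enter with a plus sign, as in Hilbert-type
matrices, and an entry with `x i + y j = 0` is `0`. -/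
def cauchyMatrix (x : m → K) (y : n → K) : Matrix m n K :=
  of fun i j => (x i + y j)⁻¹

theorem cauchyMatrix_apply (x : m → K) (y : n → K) (i : m) (j : n) :
    cauchyMatrix x y i j = (x i + y j)⁻¹ :=
  rfl

variable [Fintype n]

theorem eval_interpolate_neg_eq_eval_nodal_mul_cauchyMatrix_mulVec [DecidableEq n]
    {x : m → K} {y : n → K} (hy : Function.Injective y)
    (hxy : ∀ i j, x i + y j ≠ 0) (w : n → K) (i : m) :
    (Lagrange.interpolate Finset.univ (-y)
        fun j => w j / Lagrange.nodalWeight Finset.univ (-y) j).eval (x i) =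
      (Lagrange.nodal Finset.univ (-y)).eval (x i) * (cauchyMatrix x y *ᵥ w) i := by
  have not_node : ∀ j ∈ Finset.univ, x i ≠ (-y) j := fun j _ hj =>
    hxy i j (eq_neg_iff_add_eq_zero.mp hj)
  rw [Lagrange.eval_interpolate_not_at_node _ not_node]
  simp only [mulVec, dotProduct, cauchyMatrix_apply, Pi.neg_apply, sub_neg_eq_add]
  congr 1
  refine Finset.sum_congr rfl fun j _ => ?_
  have weight_ne_zero : Lagrange.nodalWeight Finset.univ (-y) j ≠ 0 :=
    Lagrange.nodalWeight_ne_zero (neg_injective.comp hy).injOn (Finset.mem_univ j)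
  field_simp

theorem cauchyMatrix_mulVec_injective [Fintype m] {x : m → K} {y : n → K}
    (hx : Function.Injective x) (hy : Function.Injective y) (hxy : ∀ i j, x i + y j ≠ 0)
    (hcard : Fintype.card n ≤ Fintype.card m) :
    Function.Injective (cauchyMatrix x y).mulVec := by
  classical
  refine (injective_iff_map_eq_zero (cauchyMatrix x y).mulVecLin).mpr fun w hw => ?_
  have neg_y_injOn : Set.InjOn (-y) (Finset.univ : Finset n) := (neg_injective.comp hy).injOn
  set r : n → K := fun j => w j / Lagrange.nodalWeight Finset.univ (-y) j
  have interpolate_eq_zero : Lagrange.interpolate Finset.univ (-y) r = 0 := by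
    refine Polynomial.eq_zero_of_degree_lt_of_eval_index_eq_zero Finset.univ hx.injOn ?_
      fun i _ => ?_
    · exact (Lagrange.degree_interpolate_lt r neg_y_injOn).trans_le (by exact_mod_cast hcard)
    · rw [eval_interpolate_neg_eq_eval_nodal_mul_cauchyMatrix_mulVec hy hxy, ← mulVecLin_apply,
        hw, Pi.zero_apply, mul_zero]
  ext j
  have r_eq_zero : r j = 0 := by
    rw [← Lagrange.eval_interpolate_at_node r neg_y_injOn (Finset.mem_univ j),
      interpolate_eq_zero, Polynomial.eval_zero]
  exact (div_eq_zero_iff.mp r_eq_zero).resolve_right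
    (Lagrange.nodalWeight_ne_zero neg_y_injOn (Finset.mem_univ j))

variable [DecidableEq n]

theorem isUnit_cauchyMatrix {x y : n → K} (hx : Function.Injective x)
    (hy : Function.Injective y) (hxy : ∀ i j, x i + y j ≠ 0) : IsUnit (cauchyMatrix x y) :=
  mulVec_injective_iff_isUnit.mp (cauchyMatrix_mulVec_injective hx hy hxy le_rfl)

theorem diagonal_mul_cauchyMatrix_add_cauchyMatrix_mul_diagonal [Fintype m] [DecidableEq m]
    {x : m → K} {y : n → K} (hxy : ∀ i j, x i + y j ≠ 0) :
    diagonal x * cauchyMatrix x y + cauchyMatrix x y * diagonal y = vecMulVec 1 1 := by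
  ext i j
  rw [Matrix.add_apply, diagonal_mul, mul_diagonal, mul_comm _ (y j), ← add_mul, cauchyMatrix_apply,
    mul_inv_cancel₀ (hxy i j), vecMulVec_apply, Pi.one_apply, Pi.one_apply, one_mul]

theorem sum_inv_cauchyMatrix {x y : n → K} (hx : Function.Injective x)
    (hy : Function.Injective y) (hxy : ∀ i j, x i + y j ≠ 0) :
    ∑ i, ∑ j, (cauchyMatrix x y)⁻¹ i j = ∑ i, x i + ∑ i, y i := by
  calc ∑ i, ∑ j, (cauchyMatrix x y)⁻¹ i j = 1 ⬝ᵥ (cauchyMatrix x y)⁻¹ *ᵥ 1 := by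
        simp [mulVec, dotProduct]
    _ = trace (diagonal x) + trace (diagonal y) :=
        dotProduct_inv_mulVec_eq_trace_add_trace (isUnit_cauchyMatrix hx hy hxy)
          (diagonal_mul_cauchyMatrix_add_cauchyMatrix_mul_diagonal hxy)
    _ = ∑ i, x i + ∑ i, y i := by rw [trace_diagonal, trace_diagonal]

end Cauchy

section Nodes

variable {n : ℕ}

/-- The nodes of the upper-left block of `H_o`, viewed as a Cauchy matrix. -/
noncomputable def upperNode (i : Fin n) : ℝ :=
  2 * (i : ℕ) + 1 / 2

/-- The nodes of the lower-right block of `H_o`, viewed as a Cauchy matrix. They are negative to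
account for the sign of that block. -/
noncomputable def lowerNode (i : Fin n) : ℝ :=
  -(2 * (i : ℕ) + 3 / 2)

theorem upperNode_injective : Function.Injective (upperNode (n := n)) := fun i j hij => by
  simpa [upperNode, Fin.val_inj] using hij

theorem lowerNode_injective : Function.Injective (lowerNode (n := n)) := fun i j hij => by
  simpa [lowerNode, Fin.val_inj] using hij

theorem upperNode_add_upperNode_ne_zero (i j : Fin n) : upperNode i + upperNode j ≠ 0 := by
  unfold upperNode
  positivity

theorem lowerNode_add_lowerNode_ne_zero (i j : Fin n) : lowerNode i + lowerNode j ≠ 0 := by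
  rw [lowerNode, lowerNode, ← neg_add, neg_ne_zero]
  positivity

theorem Ho_eq_fromBlocks_cauchyMatrix (n : ℕ) :
    Ho n = fromBlocks (cauchyMatrix upperNode upperNode) 0 0
      (cauchyMatrix lowerNode lowerNode) := by
  unfold Ho
  congr 1 <;> ext i j
  · rw [of_apply, cauchyMatrix_apply, upperNode, upperNode, one_div]
    ring_nf
  · rw [of_apply, cauchyMatrix_apply, lowerNode, lowerNode, ← neg_add, inv_neg, one_div]
    ring_nf

theorem sum_upperNode_add_sum_lowerNode (n : ℕ) :
    ∑ i : Fin (n + 1), upperNode i + ∑ i : Fin n, lowerNode i = n + 1 / 2 := by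
  have castSucc_add (i : Fin n) : upperNode i.castSucc + lowerNode i = -1 := by
    rw [upperNode, lowerNode, Fin.val_castSucc]
    ring
  calc ∑ i : Fin (n + 1), upperNode i + ∑ i : Fin n, lowerNode i
      = ∑ i : Fin n, (upperNode i.castSucc + lowerNode i) + upperNode (Fin.last n) := by
        rw [Fin.sum_univ_castSucc, Finset.sum_add_distrib]
        ring
    _ = n + 1 / 2 := by
        rw [Finset.sum_congr rfl fun i _ => castSucc_add i, Fin.sum_const, upperNode,
          Fin.val_last, nsmul_eq_mul]
        ring

end Nodes

/-- `H_o` is invertible and the sum of all entries of its inverse equals `k`,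
where `k = 2n+1`. -/
theorem Ho_inverse_entry_sum (n : ℕ) :
    IsUnit (Ho n) ∧ ∑ i, ∑ j, (Ho n)⁻¹ i j = ((2 * n + 1 : ℕ) : ℝ) := by
  have isUnit_upper : IsUnit (cauchyMatrix (upperNode (n := n + 1)) upperNode) :=
    isUnit_cauchyMatrix upperNode_injective upperNode_injective upperNode_add_upperNode_ne_zero
  have isUnit_lower : IsUnit (cauchyMatrix (lowerNode (n := n)) lowerNode) :=
    isUnit_cauchyMatrix lowerNode_injective lowerNode_injective lowerNode_add_lowerNode_ne_zero
  rw [Ho_eq_fromBlocks_cauchyMatrix]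
  refine ⟨isUnit_fromBlocks_zero₂₁.mpr ⟨isUnit_upper, isUnit_lower⟩, ?_⟩
  rw [sum_inv_fromBlocks_diagonal (iff_of_true isUnit_upper isUnit_lower),
    sum_inv_cauchyMatrix upperNode_injective upperNode_injective upperNode_add_upperNode_ne_zero,
    sum_inv_cauchyMatrix lowerNode_injective lowerNode_injective lowerNode_add_lowerNode_ne_zero]
  push_cast
  linarith [sum_upperNode_add_sum_lowerNode n]
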